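/- Let ℓ ≥ 3 and let x_1, …, x_ℓ be integers, each at least 2, such that x_1 ≠ x_j for all 2 ≤ j ≤ ℓ. Then there exist two non-isomorphic trees (both caterpillars) with the same multiset of vertex degrees, namely the multiset consisting of x_1, …, x_ℓ together with 2 + Σ_{i=1}^{ℓ} (x_i − 2) entries equal to 1. (This is the exchange argument used in the proof of the paper's Theorem 1: if the spine degrees of a caterpillar are not all equal and the spine has length at least 3 with x_1 different from all other spine degrees, permuting the spine degrees yields a non-isomorphic realisation of the same degree sequence.) -/

import Mathlib

/-- The vertices strictly between `a` and `b`, traversing the cycle `ZMod n`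
from `a` towards `b` in the direction of increasing residues. -/
def Between (n : ℕ) (a b v : ZMod n) : Prop :=
  0 < (v - a).val ∧ (v - a).val < (b - a).val

/-- `e` is an edge of the standard `n`-cycle on `ZMod n`. -/
def IsCycleEdge (n : ℕ) (e : Sym2 (ZMod n)) : Prop :=
  ∃ i : ZMod n, e = s(i, i + 1)

/-- A chord: an unordered pair of distinct vertices of `ZMod n` that is not an
edge of the standard `n`-cycle. -/
def IsChord (n : ℕ) (e : Sym2 (ZMod n)) : Prop :=
  ¬ e.IsDiag ∧ ¬ IsCycleEdge n e

/-- Two chords cross if exactly one endpoint of the second lies strictly between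
the endpoints of the first (traversing in the direction of increasing residues). -/
def Cross (n : ℕ) (e f : Sym2 (ZMod n)) : Prop :=
  ∀ a b c d : ZMod n, e = s(a, b) → f = s(c, d) →
    Xor' (Between n a b c) (Between n a b d)

/-- `S` is a set of pairwise non-crossing chords of the standard `n`-cycle. -/
def NonCrossingChords (n : ℕ) (S : Set (Sym2 (ZMod n))) : Prop :=
  (∀ e ∈ S, IsChord n e) ∧ ∀ e ∈ S, ∀ f ∈ S, e ≠ f → ¬ Cross n e f

/-- The chord graph of a set `S` of chords: the simple graph on `ZMod n`
whose edge set is `S`. -/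
def chordGraph (n : ℕ) (S : Set (Sym2 (ZMod n))) : SimpleGraph (ZMod n) :=
  SimpleGraph.fromEdgeSet S

/-- A vertex is chord-free for `S` if it is incident to no chord of `S`. -/
def ChordFree (n : ℕ) (S : Set (Sym2 (ZMod n))) (v : ZMod n) : Prop :=
  ∀ e ∈ S, v ∉ e

/-- An outerplane graph on `n` vertices: a simple graph on `ZMod n` whose edge
set is the (disjoint) union of the standard `n`-cycle and a set of pairwise
non-crossing chords. -/
def IsOuterplane (n : ℕ) (G : SimpleGraph (ZMod n)) : Prop :=
  ∃ S : Set (Sym2 (ZMod n)), NonCrossingChords n S ∧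
    G.edgeSet = {e | IsCycleEdge n e} ∪ S

/-- The multiset of vertex degrees of a graph on a finite vertex type. -/
noncomputable def degMultiset {V : Type*} [Fintype V] (G : SimpleGraph V) : Multiset ℕ := by
  classical exact Finset.univ.val.map fun v => G.degree v

/-- The multiset of vertex degrees of a graph on `ZMod n` (junk value for `n = 0`). -/
noncomputable def degreeMultiset (n : ℕ) (G : SimpleGraph (ZMod n)) : Multiset ℕ :=
  if h : n = 0 then 0
  else by haveI : NeZero n := ⟨h⟩; exact degMultiset G

/-- `M` is outerplane-unigraphic on `n` vertices: there is an outerplane graph on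
`n` vertices with degree multiset `M`, and any two such are isomorphic. -/
def OuterplaneUnigraphic (n : ℕ) (M : Multiset ℕ) : Prop :=
  (∃ G : SimpleGraph (ZMod n), IsOuterplane n G ∧ degreeMultiset n G = M) ∧
  ∀ G G' : SimpleGraph (ZMod n), IsOuterplane n G → IsOuterplane n G' →
    degreeMultiset n G = M → degreeMultiset n G' = M → Nonempty (G ≃g G')

/-- A caterpillar: a connected acyclic graph (tree) in which all vertices of
degree at least two lie on a common path. -/
def IsCaterpillar {V : Type*} (G : SimpleGraph V) : Prop :=
  G.Connected ∧ G.IsAcyclic ∧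
    ∃ (u w : V) (p : G.Walk u w), p.IsPath ∧
      ∀ v : V, (∃ a b : V, a ≠ b ∧ G.Adj v a ∧ G.Adj v b) → v ∈ p.support

section CatHelpers
open SimpleGraph

def catC (ℓ : ℕ) (x : Fin ℓ → ℕ) (i : Fin ℓ) : ℕ :=
  x i - 2 + (if i.val = 0 then 1 else 0) + (if i.val + 1 = ℓ then 1 else 0)

abbrev CatV (ℓ : ℕ) (x : Fin ℓ → ℕ) : Type := Fin ℓ ⊕ (Σ i : Fin ℓ, Fin (catC ℓ x i))

def catAdj (ℓ : ℕ) (x : Fin ℓ → ℕ) : CatV ℓ x → CatV ℓ x → Prop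
  | .inl i, .inl j => i.val + 1 = j.val ∨ j.val + 1 = i.val
  | .inl i, .inr q => q.1 = i
  | .inr q, .inl i => q.1 = i
  | .inr _, .inr _ => False

def catG (ℓ : ℕ) (x : Fin ℓ → ℕ) : SimpleGraph (CatV ℓ x) where
  Adj := catAdj ℓ x
  symm := ⟨by
    rintro (i | q) (j | r) h
    · exact Or.symm h
    · exact h
    · exact h
    · exact h⟩
  loopless := ⟨by
    rintro (i | q) h
    · simp [catAdj] at h
    · exact h⟩

lemma sum_catC (ℓ : ℕ) (hℓ : 3 ≤ ℓ) (x : Fin ℓ → ℕ) :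
    ∑ i, catC ℓ x i = 2 + ∑ i, (x i - 2) := by
  unfold catC
  rw [Finset.sum_add_distrib, Finset.sum_add_distrib]
  have h1 : ∑ i : Fin ℓ, (if i.val = 0 then 1 else 0) = 1 := by
    rw [Finset.sum_eq_single (⟨0, by omega⟩ : Fin ℓ)]
    · simp
    · intro b _ hb
      rw [if_neg]
      intro h; exact hb (Fin.ext h)
    · simp
  have h2 : ∑ i : Fin ℓ, (if i.val + 1 = ℓ then 1 else 0) = 1 := by
    rw [Finset.sum_eq_single (⟨ℓ - 1, by omega⟩ : Fin ℓ)]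
    · rw [if_pos]; simp; omega
    · intro b _ hb
      rw [if_neg]
      intro h; exact hb (Fin.ext (by simp; omega))
    · simp
  rw [h1, h2]; omega

lemma card_catV (ℓ : ℕ) (hℓ : 3 ≤ ℓ) (x : Fin ℓ → ℕ) :
    Fintype.card (CatV ℓ x) = ℓ + (2 + ∑ i, (x i - 2)) := by
  simp [CatV, sum_catC ℓ hℓ x]

lemma deg_eq_ncard {V : Type*} (G : SimpleGraph V) (v : V) [Fintype (G.neighborSet v)] :
    G.degree v = (G.neighborSet v).ncard := by
  rw [← Nat.card_coe_set_eq, Nat.card_eq_fintype_card, card_neighborSet_eq_degree]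

lemma deg_inr (ℓ : ℕ) (x : Fin ℓ → ℕ) (q) [Fintype ((catG ℓ x).neighborSet (.inr q))] :
    (catG ℓ x).degree (.inr q) = 1 := by
  rw [deg_eq_ncard, Set.ncard_eq_one]
  refine ⟨.inl q.1, ?_⟩
  ext (i | r)
  · simp [catG, catAdj, eq_comm]
  · simp [catG, catAdj]

lemma deg_inl (ℓ : ℕ) (hℓ : 3 ≤ ℓ) (x : Fin ℓ → ℕ) (hx : ∀ i, 2 ≤ x i) (i)
    [Fintype ((catG ℓ x).neighborSet (.inl i))] :
    (catG ℓ x).degree (.inl i) = x i := by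
  rw [deg_eq_ncard]
  have hs : (catG ℓ x).neighborSet (.inl i) =
      (Sum.inl '' ({j : Fin ℓ | i.val + 1 = j.val} ∪ {j : Fin ℓ | j.val + 1 = i.val})) ∪
      (Set.range fun k : Fin (catC ℓ x i) => (Sum.inr ⟨i, k⟩ : CatV ℓ x)) := by
    ext (j | ⟨j, k⟩)
    · simp [catG, catAdj]
    · simp only [mem_neighborSet, catG, catAdj]
      constructor
      · rintro rfl
        exact Or.inr ⟨k, rfl⟩
      · rintro (⟨_, _, h⟩ | ⟨k', h⟩)
        · cases h
        · simp at h; exact h.1.symm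
  have hr : (Set.range fun k : Fin (catC ℓ x i) => (Sum.inr ⟨i, k⟩ : CatV ℓ x)).ncard
      = catC ℓ x i := by
    rw [← Set.image_univ, Set.ncard_image_of_injective, Set.ncard_univ, Nat.card_fin]
    intro a b h
    simpa using h
  have h1 : ({j : Fin ℓ | i.val + 1 = j.val}).ncard = if i.val + 1 = ℓ then 0 else 1 := by
    split_ifs with h
    · rw [Set.ncard_eq_zero]
      ext j; simp; omega
    · rw [Set.ncard_eq_one]
      refine ⟨⟨i.val + 1, by omega⟩, ?_⟩
      ext j; simp [Fin.ext_iff, eq_comm]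
  have h2 : ({j : Fin ℓ | j.val + 1 = i.val}).ncard = if i.val = 0 then 0 else 1 := by
    split_ifs with h
    · rw [Set.ncard_eq_zero]
      ext j; simp; omega
    · rw [Set.ncard_eq_one]
      refine ⟨⟨i.val - 1, by omega⟩, ?_⟩
      ext j; simp [Fin.ext_iff]; omega
  rw [hs, Set.ncard_union_eq, hr, Set.ncard_image_of_injective _ Sum.inl_injective,
    Set.ncard_union_eq, h1, h2]
  · have := hx i
    unfold catC
    split_ifs <;> omega
  · rw [Set.disjoint_left]; intro j; simp; omega
  · rw [Set.disjoint_left]; rintro _ ⟨j, _, rfl⟩; simp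

lemma degM_cat (ℓ : ℕ) (hℓ : 3 ≤ ℓ) (x : Fin ℓ → ℕ) (hx : ∀ i, 2 ≤ x i) :
    degMultiset (catG ℓ x) =
      Finset.univ.val.map x + Multiset.replicate (2 + ∑ i, (x i - 2)) 1 := by
  classical
  unfold degMultiset
  rw [← Finset.univ_disjSum_univ, Finset.val_disjSum, Multiset.disjSum, Multiset.map_add,
    Multiset.map_map, Multiset.map_map]
  congr 1
  · apply Multiset.map_congr rfl
    intro i _
    exact deg_inl ℓ hℓ x hx i
  · rw [Multiset.eq_replicate]
    constructor
    · simp [sum_catC ℓ hℓ x]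
    · intro b hb
      rw [Multiset.mem_map] at hb
      obtain ⟨q, _, rfl⟩ := hb
      exact deg_inr ℓ x q

lemma cat_path (ℓ : ℕ) (hℓ : 3 ≤ ℓ) (x : Fin ℓ → ℕ) (k : ℕ) (hk : k < ℓ) :
    ∃ p : (catG ℓ x).Walk (.inl ⟨0, by omega⟩) (.inl ⟨k, hk⟩), p.IsPath ∧
      ∀ v, v ∈ p.support ↔ ∃ i : Fin ℓ, i.val ≤ k ∧ v = .inl i := by
  induction k with
  | zero =>
    refine ⟨.nil, .nil, ?_⟩
    intro v
    simp only [Walk.support_nil, List.mem_singleton]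
    constructor
    · rintro rfl; exact ⟨_, le_refl _, rfl⟩
    · rintro ⟨i, hi, rfl⟩
      congr 1; apply Fin.ext; simpa using hi
  | succ k ih =>
    obtain ⟨p, hp, hs⟩ := ih (by omega)
    have ha : (catG ℓ x).Adj (.inl ⟨k, by omega⟩) (.inl ⟨k+1, hk⟩) := Or.inl rfl
    refine ⟨p.concat ha, hp.concat ?_ ha, ?_⟩
    · rw [hs]; rintro ⟨i, hi, h⟩
      cases h; simp at hi
    · intro v
      rw [Walk.support_concat, List.mem_append, List.mem_singleton, hs]
      constructor
      · rintro (⟨i, hi, rfl⟩ | rfl)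
        · exact ⟨i, by omega, rfl⟩
        · exact ⟨_, le_refl _, rfl⟩
      · rintro ⟨i, hi, rfl⟩
        by_cases h : i.val ≤ k
        · exact Or.inl ⟨i, h, rfl⟩
        · right; congr 1; apply Fin.ext; simp; omega

lemma cat_connected (ℓ : ℕ) (hℓ : 3 ≤ ℓ) (x : Fin ℓ → ℕ) : (catG ℓ x).Connected := by
  rw [connected_iff_exists_forall_reachable]
  refine ⟨.inl ⟨0, by omega⟩, ?_⟩
  have h : ∀ i : Fin ℓ, (catG ℓ x).Reachable (.inl ⟨0, by omega⟩) (.inl i) := fun i =>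
    ⟨(cat_path ℓ hℓ x i.val i.isLt).choose⟩
  rintro (i | q)
  · exact h i
  · refine (h q.1).trans (Adj.reachable ?_)
    exact (rfl : q.1 = q.1)

lemma cat_isTree (ℓ : ℕ) (hℓ : 3 ≤ ℓ) (x : Fin ℓ → ℕ) (hx : ∀ i, 2 ≤ x i) :
    (catG ℓ x).IsTree := by
  classical
  rw [isTree_iff_connected_and_card]
  refine ⟨cat_connected ℓ hℓ x, ?_⟩
  have h := sum_degrees_eq_twice_card_edges (catG ℓ x)
  have h2 : ∑ v, (catG ℓ x).degree v = (degMultiset (catG ℓ x)).sum := by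
    unfold degMultiset
    rfl
  rw [h2, degM_cat ℓ hℓ x hx, Multiset.sum_add, Multiset.sum_replicate] at h
  have h3 : (Finset.univ.val.map x).sum = ∑ i, (x i - 2) + 2 * ℓ := by
    change ∑ i, x i = _
    calc ∑ i, x i = ∑ i, ((x i - 2) + 2) := by
          apply Finset.sum_congr rfl
          intro i _; have := hx i; omega
      _ = _ := by rw [Finset.sum_add_distrib]; simp [mul_comm]
  rw [h3] at h
  rw [Nat.card_eq_fintype_card, Nat.card_eq_fintype_card, card_catV ℓ hℓ x, ← edgeFinset_card]
  simp only [smul_eq_mul, mul_one] at h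
  omega

lemma cat_isCat (ℓ : ℕ) (hℓ : 3 ≤ ℓ) (x : Fin ℓ → ℕ) (hx : ∀ i, 2 ≤ x i) :
    IsCaterpillar (catG ℓ x) := by
  refine ⟨cat_connected ℓ hℓ x, (cat_isTree ℓ hℓ x hx).isAcyclic, ?_⟩
  obtain ⟨p, hp, hs⟩ := cat_path ℓ hℓ x (ℓ - 1) (by omega)
  refine ⟨_, _, p, hp, ?_⟩
  rintro (i | q) ⟨a, b, hab, ha, hb⟩
  · rw [hs]; exact ⟨i, by omega, rfl⟩
  · exfalso
    rcases a with a | a <;> rcases b with b | b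
    · exact hab (congrArg _ ((show q.1 = a from ha).symm.trans (show q.1 = b from hb)))
    · exact hb
    · exact ha
    · exact ha

lemma isCat_iso {V W : Type*} {G : SimpleGraph V} {H : SimpleGraph W} (e : G ≃g H)
    (h : IsCaterpillar G) : IsCaterpillar H := by
  obtain ⟨h1, h2, u, w, p, hp, hs⟩ := h
  refine ⟨e.connected_iff.1 h1, e.isAcyclic_iff.1 h2, e u, e w, p.map e.toHom,
    Walk.map_isPath_of_injective e.injective hp, ?_⟩
  rintro v ⟨a, b, hab, ha, hb⟩
  rw [Walk.support_map, List.mem_map]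
  refine ⟨e.symm v, hs _ ⟨e.symm a, e.symm b, ?_, ?_, ?_⟩, ?_⟩
  · exact fun h => hab (e.symm.injective h)
  · exact e.symm.map_adj_iff.2 ha
  · exact e.symm.map_adj_iff.2 hb
  · exact e.apply_symm_apply v

lemma degM_iso {V W : Type*} [Fintype V] [Fintype W] {G : SimpleGraph V} {H : SimpleGraph W}
    (e : G ≃g H) : degMultiset H = degMultiset G := by
  classical
  unfold degMultiset
  rw [← Finset.map_univ_equiv e.toEquiv, Finset.map_val, Multiset.map_map]
  apply Multiset.map_congr rfl
  intro v _
  exact e.degree_eq v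

lemma cat_exists (ℓ : ℕ) (hℓ : 3 ≤ ℓ) (x : Fin ℓ → ℕ) (hx : ∀ i, 2 ≤ x i) (N : ℕ)
    (hN : ℓ + (2 + ∑ i, (x i - 2)) = N) :
    ∃ G : SimpleGraph (Fin N), IsCaterpillar G ∧
      degMultiset G = Finset.univ.val.map x + Multiset.replicate (2 + ∑ i, (x i - 2)) 1 ∧
      Nonempty (catG ℓ x ≃g G) := by
  let e : CatV ℓ x ≃ Fin N := Fintype.equivFinOfCardEq ((card_catV ℓ hℓ x).trans hN)
  let φ : catG ℓ x ≃g (catG ℓ x).map e.toEmbedding := Iso.map e _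
  exact ⟨_, isCat_iso φ (cat_isCat ℓ hℓ x hx),
    (degM_iso φ).trans (degM_cat ℓ hℓ x hx), ⟨φ⟩⟩

end CatHelpers

/-- The exchange argument for caterpillars: if `ℓ ≥ 3` and the spine degrees
`x₁, …, x_ℓ ≥ 2` satisfy `x₁ ≠ x_j` for all `j ≥ 2`, then there are two
non-isomorphic caterpillars with the same degree multiset, consisting of
`x₁, …, x_ℓ` together with `2 + ∑ᵢ (xᵢ - 2)` entries equal to `1`. -/
theorem two_caterpillar_realisations (ℓ : ℕ) (hℓ : 3 ≤ ℓ)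
    (x : Fin ℓ → ℕ) (hx : ∀ i, 2 ≤ x i)
    (hne : ∀ j : Fin ℓ, j ≠ ⟨0, by omega⟩ → x ⟨0, by omega⟩ ≠ x j) :
    ∃ G G' : SimpleGraph (Fin (ℓ + (2 + ∑ i, (x i - 2)))),
      IsCaterpillar G ∧ IsCaterpillar G' ∧
      degMultiset G =
        Finset.univ.val.map x + Multiset.replicate (2 + ∑ i, (x i - 2)) 1 ∧
      degMultiset G' =
        Finset.univ.val.map x + Multiset.replicate (2 + ∑ i, (x i - 2)) 1 ∧
      ¬ Nonempty (G ≃g G') := by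
  classical
  set i0 : Fin ℓ := ⟨0, by omega⟩ with hi0
  set i1 : Fin ℓ := ⟨1, by omega⟩ with hi1
  set i2 : Fin ℓ := ⟨2, by omega⟩ with hi2
  have h01 : i0 ≠ i1 := by simp [hi0, hi1]
  let s : Equiv.Perm (Fin ℓ) := Equiv.swap i0 i1
  let y : Fin ℓ → ℕ := fun i => x (s i)
  have hy : ∀ i, 2 ≤ y i := fun i => hx _
  have hsum : ∑ i, (y i - 2) = ∑ i, (x i - 2) := Equiv.sum_comp s (fun i => x i - 2)
  have hmap : Finset.univ.val.map y = Finset.univ.val.map x := by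
    conv_rhs => rw [← Finset.map_univ_equiv s, Finset.map_val, Multiset.map_map]
    rfl
  obtain ⟨G, hG, hGd, ⟨e⟩⟩ := cat_exists ℓ hℓ x hx _ rfl
  obtain ⟨G', hG', hGd', ⟨e'⟩⟩ := cat_exists ℓ hℓ y hy
    (ℓ + (2 + ∑ i, (x i - 2))) (by rw [hsum])
  rw [hsum, hmap] at hGd'
  refine ⟨G, G', hG, hG', hGd, hGd', ?_⟩
  rintro ⟨f⟩
  let φ : catG ℓ x ≃g catG ℓ y := (e.trans f).trans e'.symm
  have hφ : φ (.inl i0) = .inl i1 := by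
    have hd := φ.degree_eq (.inl i0)
    rw [deg_inl ℓ hℓ x hx] at hd
    rcases hv : φ (.inl i0) with j | q
    · rw [hv, deg_inl ℓ hℓ y hy] at hd
      have hj : s j = i0 := by
        by_contra h
        exact hne _ h hd.symm
      have : j = s.symm i0 := by rw [← hj]; simp
      rw [this]
      simp [s]
    · rw [hv, deg_inr] at hd
      have := hx i0
      omega
  have key : ∀ j : Fin ℓ, (catG ℓ y).Adj (.inl i1) (.inl j) →
      φ.symm (.inl j) = .inl i1 := by
    intro j hj
    have ha : (catG ℓ x).Adj (.inl i0) (φ.symm (.inl j)) := by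
      rw [← φ.map_adj_iff, hφ]
      simpa using hj
    have hd := φ.symm.degree_eq (.inl j)
    rw [deg_inl ℓ hℓ y hy] at hd
    rcases hv : φ.symm (.inl j) with k | q
    · rw [hv] at ha
      have ha' : i0.val + 1 = k.val ∨ k.val + 1 = i0.val := ha
      congr 1
      apply Fin.ext
      simp only [hi0, hi1] at ha' ⊢
      omega
    · rw [hv, deg_inr] at hd
      have := hy j
      omega
  have k0 := key i0 (Or.inr rfl)
  have k2 := key i2 (Or.inl rfl)
  have := φ.symm.injective (k0.trans k2.symm)
  simp [hi0, hi2] at this
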